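/- Let δ > 0 and let z ∈ T_L ∩ H_L with ‖z‖_∞ ≤ L/2. If ⟨φ_o^1 φ_z^1⟩_{L,N,β} ≥ 1/N − δ, then for every x ∈ Q_z ∖ H_L one has ⟨φ_o^1 φ_x^1⟩_{L,N,β} ≥ (1/N − 2^d δ) · (β e^{−2dβ} / N)^{d−2}. -/

import Mathlib

/-!
Write `v u` for the correlation of the first spin components at `0` and `u`. Reflection positivity
for the hyperplanes orthogonal to the `i`-th axis, through sites and through edges, applied to
`φ_a^1 - φ_b^1`, gives `2 v (u) ≤ v (p e_i) + v (q e_i)` whenever `p + q = 2 u_i`. For `p = q` this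
says that projecting `u` to an axis does not decrease `v`; for `p = n`, `q = n + 2` and `u` on the
axis it says that `v` is convex along the axis, hence, being symmetric under `n ↦ L - n`,
nonincreasing on `[0, L / 2]`. So `v (x_i e_i) ≥ v z ≥ 1 / N - δ` for every `x` in the box of `z`.

The `L²` distance from `φ_0^1` to `φ_u^1` is `√(2 (1 / N - v u))`, and by translation invariance the
triangle inequality makes it subadditive in `u`. Summing over the `k` nonzero coordinates of `x`
yields `v x ≥ 1 / N - k² δ`. A point outside `H_L` has `k < d`, whence `k² ≤ 2 ^ d`, and the factor
`β e^{-2dβ} / N` is at most `1`, so this implies the claim if `1 / N ≥ 2 ^ d δ`; otherwise the claim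
follows from `v x ≥ 0`, Griffiths' first inequality.
-/

open MeasureTheory Metric
open scoped RealInnerProductSpace BigOperators

/-- Vertices of the torus `(ℤ/Lℤ)^d`. -/
abbrev TorusPt (d L : ℕ) := Fin d → ZMod L

/-- Nearest-neighbour adjacency on the torus: `x` and `y` differ by `±1 (mod L)`
in exactly one coordinate. -/
def torusAdj {d L : ℕ} (x y : TorusPt d L) : Prop :=
  ∃ j : Fin d, y = Function.update x j (x j + 1) ∨ y = Function.update x j (x j - 1)

instance {d L : ℕ} (x y : TorusPt d L) : Decidable (torusAdj x y) := by
  unfold torusAdj; infer_instance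

/-- The unit sphere `S^{N-1} ⊂ ℝ^N`. -/
abbrev SpinSphere (N : ℕ) := sphere (0 : EuclideanSpace ℝ (Fin N)) 1

/-- A spin configuration on the torus. -/
abbrev SpinCfg (d L N : ℕ) := TorusPt d L → SpinSphere N

/-- The uniform probability measure on the unit sphere `S^{N-1}`. -/
noncomputable def sphereUniform (N : ℕ) : Measure (SpinSphere N) :=
  ((volume : Measure (EuclideanSpace ℝ (Fin N))).toSphere Set.univ)⁻¹ •
    (volume : Measure (EuclideanSpace ℝ (Fin N))).toSphere

/-- The product over vertices of the uniform probability measures on the sphere. -/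
noncomputable def spinMeasure (d L N : ℕ) [NeZero L] : Measure (SpinCfg d L N) :=
  Measure.pi fun _ : TorusPt d L => sphereUniform N

/-- The Hamiltonian `H(φ) = -∑_{{x,y} edge} φ_x · φ_y`; every unordered
nearest-neighbour edge appears exactly twice in the double sum below. -/
noncomputable def hamiltonian {d L N : ℕ} [NeZero L] (φ : SpinCfg d L N) : ℝ :=
  -(1 / 2) * ∑ x : TorusPt d L, ∑ y : TorusPt d L,
    if torusAdj x y then
      ⟪(φ x : EuclideanSpace ℝ (Fin N)), (φ y : EuclideanSpace ℝ (Fin N))⟫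
    else 0

/-- The Gibbs expectation `⟨f⟩_{L,N,β}`. -/
noncomputable def gibbsExp (d L N : ℕ) [NeZero L] (β : ℝ) (f : SpinCfg d L N → ℝ) : ℝ :=
  (∫ φ, Real.exp (-β * hamiltonian φ) ∂(spinMeasure d L N))⁻¹ *
    ∫ φ, f φ * Real.exp (-β * hamiltonian φ) ∂(spinMeasure d L N)

/-- The spin-spin correlation `⟨φ_x ⬝ φ_y⟩_{L,N,β}`. -/
noncomputable def corrDot (d L N : ℕ) [NeZero L] (β : ℝ) (x y : TorusPt d L) : ℝ :=
  gibbsExp d L N β fun φ =>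
    ⟪(φ x : EuclideanSpace ℝ (Fin N)), (φ y : EuclideanSpace ℝ (Fin N))⟫

/-- The correlation `⟨φ_x^1 φ_y^1⟩_{L,N,β}` of first components. -/
noncomputable def corrOne (d L N : ℕ) [NeZero L] [NeZero N] (β : ℝ) (x y : TorusPt d L) : ℝ :=
  gibbsExp d L N β fun φ =>
    (φ x : EuclideanSpace ℝ (Fin N)) 0 * (φ y : EuclideanSpace ℝ (Fin N)) 0

/-- The origin of the torus. -/
def torusOrigin (d L : ℕ) : TorusPt d L := fun _ => 0

/-- The point `n • e_i` on the `i`-th cartesian axis. -/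
def axisPt (d L : ℕ) (i : Fin d) (n : ℕ) : TorusPt d L :=
  fun k => if k = i then (n : ZMod L) else 0

/-- The sup torus norm `‖z‖_∞ = max_i min(z_i, L - z_i)`. -/
def tnormInf {d L : ℕ} (z : TorusPt d L) : ℕ :=
  Finset.univ.sup fun i : Fin d => min (z i).val (L - (z i).val)

/-- Reflection of torus sites through the plane of sites `{x : x_i = m}`:
`Θ(x)_i = 2m - x_i (mod L)` and the other coordinates are unchanged. -/
def reflSite {d L : ℕ} (i : Fin d) (m : ℕ) (x : TorusPt d L) : TorusPt d L :=
  Function.update x i (2 * (m : ZMod L) - x i)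

/-- Membership in the half-torus `T_L^+ = {x : x_i - m (mod L) ∈ {0,…,L/2}}`. -/
def inPlusSite {d L : ℕ} (i : Fin d) (m : ℕ) (x : TorusPt d L) : Prop :=
  (x i - (m : ZMod L)).val ≤ L / 2

/-- Membership in the other half-torus `T_L^- = Θ(T_L^+)`. -/
def inMinusSite {d L : ℕ} (i : Fin d) (m : ℕ) (x : TorusPt d L) : Prop :=
  inPlusSite i m (reflSite i m x)

/-- Membership in the fixed-point set `T_L^R = {x : x_i = m or x_i = m + L/2 (mod L)}`. -/
def inFixedSite {d L : ℕ} (i : Fin d) (m : ℕ) (x : TorusPt d L) : Prop :=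
  (x i - (m : ZMod L)).val = 0 ∨ (x i - (m : ZMod L)).val = L / 2

instance {d L : ℕ} (i : Fin d) (m : ℕ) : DecidablePred (inPlusSite (d := d) (L := L) i m) :=
  fun x => by unfold inPlusSite; infer_instance

instance {d L : ℕ} (i : Fin d) (m : ℕ) : DecidablePred (inMinusSite (d := d) (L := L) i m) :=
  fun x => by unfold inMinusSite inPlusSite; infer_instance

instance {d L : ℕ} (i : Fin d) (m : ℕ) : DecidablePred (inFixedSite (d := d) (L := L) i m) :=
  fun x => by unfold inFixedSite; infer_instance

/-- Reflection through sites acting on spin configurations: `(Θφ)_x = φ_{Θ(x)}`. -/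
def reflSiteCfg {d L N : ℕ} (i : Fin d) (m : ℕ) (φ : SpinCfg d L N) : SpinCfg d L N :=
  fun x => φ (reflSite i m x)

/-- The set `H_L` of vertices with all coordinates nonzero, together with the
nonzero points of the cartesian axes. -/
def inHL {d L : ℕ} (x : TorusPt d L) : Prop :=
  (∀ j, x j ≠ 0) ∨ ∃ i, x i ≠ 0 ∧ ∀ j, j ≠ i → x j = 0

/-- `ẑ_i = min(z_i, L - z_i)`, the torus distance of the `i`-th coordinate from `0`. -/
def hatCoord {d L : ℕ} (z : TorusPt d L) (i : Fin d) : ℕ :=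
  min (z i).val (L - (z i).val)

/-- The box `Q_z = {x : ∀ i, x_i ≤ ẑ_i or x_i > L - ẑ_i}` with corner `z`. -/
def inBoxQ {d L : ℕ} (z x : TorusPt d L) : Prop :=
  ∀ i, (x i).val ≤ hatCoord z i ∨ L - hatCoord z i < (x i).val

open scoped NNReal

lemma integral_comp_of_measurePreserving {α β E : Type*} [MeasurableSpace α] [MeasurableSpace β]
    [NormedAddCommGroup E] [NormedSpace ℝ E] {μ : Measure α} {ν : Measure β} {T : α → β}
    (hT : MeasurePreserving T μ ν) {f : β → E} (hf : AEStronglyMeasurable f ν) :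
    ∫ a, f (T a) ∂μ = ∫ b, f b ∂ν := by
  rw [← hT.map_eq, integral_map hT.measurable.aemeasurable (hT.map_eq ▸ hf)]

lemma measurePreserving_tilted {α β : Type*} [MeasurableSpace α] [MeasurableSpace β]
    {μ : Measure α} {ν : Measure β} {T : α → β} (hT : MeasurePreserving T μ ν) {g : β → ℝ}
    (hg : Measurable g) : MeasurePreserving T (μ.tilted (g ∘ T)) (ν.tilted g) := by
  refine ⟨hT.measurable, Measure.ext fun s hs => ?_⟩
  have hZ : ∫ a, Real.exp (g (T a)) ∂μ = ∫ b, Real.exp (g b) ∂ν :=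
    integral_comp_of_measurePreserving hT hg.exp.aestronglyMeasurable
  rw [Measure.map_apply hT.measurable hs, tilted_apply' _ _ (hT.measurable hs),
    tilted_apply' _ _ hs]
  simp only [Function.comp_apply, hZ]
  exact hT.setLIntegral_comp_preimage hs
    (f := fun b => ENNReal.ofReal (Real.exp (g b) / ∫ b, Real.exp (g b) ∂ν)) (by fun_prop)

section ExponentialPositivity

variable {Ω : Type*} [TopologicalSpace Ω] [CompactSpace Ω] [MeasurableSpace Ω] [BorelSpace Ω]
  {μ : Measure Ω} [IsFiniteMeasure μ]

lemma integrable_of_continuous_of_compactSpace {f : Ω → ℝ} (hf : Continuous f) : Integrable f μ :=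
  hf.integrable_of_hasCompactSupport (HasCompactSupport.of_compactSpace f)

lemma hasSum_integral_mul_pow_div_factorial (f t : C(Ω, ℝ)) :
    HasSum (fun k : ℕ => (∫ ω, f ω * t ω ^ k ∂μ) / k.factorial)
      (∫ ω, f ω * Real.exp (t ω) ∂μ) := by
  have hexp (ω : Ω) : HasSum (fun k : ℕ => t ω ^ k / k.factorial) (Real.exp (t ω)) := by
    simpa only [Real.exp_eq_exp_ℝ] using NormedSpace.expSeries_div_hasSum_exp (𝔸 := ℝ) (t ω)
  have hbound (k : ℕ) (ω : Ω) :
      ‖f ω * (t ω ^ k / k.factorial)‖ ≤ ‖f‖ * (‖t‖ ^ k / k.factorial) := by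
    rw [norm_mul, norm_div, norm_pow, Real.norm_natCast]
    gcongr <;> exact ContinuousMap.norm_coe_le_norm _ ω
  have hterm (k : ℕ) : Continuous fun ω => f ω * (t ω ^ k / k.factorial) := by fun_prop
  simp_rw [← integral_div, mul_div_assoc]
  exact hasSum_integral_of_dominated_convergence (fun k _ => ‖f‖ * (‖t‖ ^ k / k.factorial))
    (fun k => (hterm k).aestronglyMeasurable) (fun k => .of_forall (hbound k))
    (.of_forall fun _ => (Real.summable_pow_div_factorial ‖t‖).mul_left ‖f‖)
    (integrable_const _) (.of_forall fun ω => (hexp ω).mul_left (f ω))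

variable {M : Submonoid C(Ω, ℝ)}

lemma integral_nonneg_of_mem_adjoin (hM : ∀ f ∈ M, 0 ≤ ∫ ω, f ω ∂μ) {f : C(Ω, ℝ)}
    (hf : f ∈ Algebra.adjoin ℝ≥0 (M : Set C(Ω, ℝ))) : 0 ≤ ∫ ω, f ω ∂μ := by
  rw [← Subalgebra.mem_toSubmodule, Algebra.adjoin_eq_span, Submonoid.closure_eq] at hf
  induction hf using Submodule.span_induction with
  | mem f hf => exact hM f hf
  | zero => simp
  | add f g _ _ hf hg =>
    simpa only [ContinuousMap.add_apply, integral_add (integrable_of_continuous_of_compactSpace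
      f.continuous) (integrable_of_continuous_of_compactSpace g.continuous)] using add_nonneg hf hg
  | smul c f _ hf => exact (mul_nonneg c.2 hf).trans_eq (integral_const_mul (c : ℝ) f).symm

lemma integral_mul_exp_nonneg_of_mem_adjoin (hM : ∀ f ∈ M, 0 ≤ ∫ ω, f ω ∂μ) {f t : C(Ω, ℝ)}
    (hf : f ∈ Algebra.adjoin ℝ≥0 (M : Set C(Ω, ℝ)))
    (ht : t ∈ Algebra.adjoin ℝ≥0 (M : Set C(Ω, ℝ))) : 0 ≤ ∫ ω, f ω * Real.exp (t ω) ∂μ :=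
  (hasSum_integral_mul_pow_div_factorial f t).nonneg fun k =>
    div_nonneg (integral_nonneg_of_mem_adjoin hM (mul_mem hf (pow_mem ht k))) (Nat.cast_nonneg _)

end ExponentialPositivity

lemma smul_mem_adjoin_of_nonneg {A : Type*} [Semiring A] [Algebra ℝ A] {s : Set A} {c : ℝ}
    (hc : 0 ≤ c) {f : A} (hf : f ∈ Algebra.adjoin ℝ≥0 s) : c • f ∈ Algebra.adjoin ℝ≥0 s :=
  Subalgebra.smul_mem _ hf (⟨c, hc⟩ : ℝ≥0)

section ProductMeasure

variable {ι : Type*} [Fintype ι] {X : ι → Type*} [∀ i, MeasurableSpace (X i)]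
  (ν : ∀ i, Measure (X i)) [∀ i, IsProbabilityMeasure (ν i)]

lemma measurePreserving_set_piecewise (s : Set ι) [∀ i, Decidable (i ∈ s)] :
    MeasurePreserving (fun p : (∀ i, X i) × (∀ i, X i) => s.piecewise p.1 p.2)
      ((Measure.pi ν).prod (Measure.pi ν)) (Measure.pi ν) := by
  have hmeas : Measurable fun p : (∀ i, X i) × (∀ i, X i) => s.piecewise p.1 p.2 := by
    refine measurable_pi_lambda _ fun i => ?_
    by_cases hi : i ∈ s <;> simp only [hi, Set.piecewise_eq_of_mem, Set.piecewise_eq_of_notMem,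
      not_false_eq_true] <;> fun_prop
  refine ⟨hmeas, (Measure.pi_eq fun t ht => ?_).symm⟩
  have hpre : (fun p : (∀ i, X i) × (∀ i, X i) => s.piecewise p.1 p.2) ⁻¹' Set.univ.pi t =
      s.pi t ×ˢ sᶜ.pi t := by
    ext p
    simp only [Set.mem_preimage, Set.mem_prod, Set.mem_pi, Set.mem_compl_iff]
    refine ⟨fun h => ⟨fun i hi => by simpa [hi] using h i, fun i hi => by simpa [hi] using h i⟩,
      fun h i => ?_⟩
    by_cases hi : i ∈ s
    · simpa [hi] using h.1 i hi
    · simpa [hi] using h.2 i hi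
  rw [Measure.map_apply hmeas (.univ_pi ht), hpre, Measure.prod_prod,
    ← Set.univ_pi_piecewise_univ s, ← Set.univ_pi_piecewise_univ sᶜ, Measure.pi_pi, Measure.pi_pi,
    ← Finset.prod_mul_distrib]
  refine Finset.prod_congr rfl fun i _ => ?_
  by_cases hi : i ∈ s <;> simp [hi]

lemma integral_mul_of_dependsOn_compl {f g : (∀ i, X i) → ℝ} {s : Set ι}
    (hf : DependsOn f s) (hg : DependsOn g sᶜ) (hfm : Measurable f) (hgm : Measurable g) :
    ∫ φ, f φ * g φ ∂Measure.pi ν = (∫ φ, f φ ∂Measure.pi ν) * ∫ φ, g φ ∂Measure.pi ν := by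
  classical
  rw [← integral_prod_mul, ← integral_comp_of_measurePreserving
    (measurePreserving_set_piecewise ν s) (f := fun φ => f φ * g φ)
    (hfm.mul hgm).aestronglyMeasurable]
  refine integral_congr_ae (.of_forall fun p => ?_)
  exact congr_arg₂ _ (hf fun i hi => by simp [hi])
    (hg fun i hi => Set.piecewise_eq_of_notMem _ _ _ hi)

lemma measurePreserving_comp_perm {ι X : Type*} [Fintype ι] [MeasurableSpace X] (ν : Measure X)
    [SigmaFinite ν] (σ : Equiv.Perm ι) :
    MeasurePreserving (fun φ : ι → X => φ ∘ σ) (Measure.pi fun _ => ν) (Measure.pi fun _ => ν) :=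
  measurePreserving_arrowCongr' (fun _ => ν) (fun _ => ν) σ.symm (.refl X) fun _ => .id ν

end ProductMeasure

section SpinSystem

variable {ι κ X : Type*} [Fintype κ] [TopologicalSpace X]

/-- The observable `φ ↦ g (φ x)` of a spin configuration, as a function of `g`. -/
def siteFun (x : ι) : C(X, ℝ) →ₐ[ℝ] C(ι → X, ℝ) :=
  ContinuousMap.compRightAlgHom ℝ ℝ (ContinuousMap.eval x)

/-- The action `f ↦ (φ ↦ f (φ ∘ σ))` of a map of the sites on observables. -/
def reindex (σ : ι → ι) : C(ι → X, ℝ) →ₐ[ℝ] C(ι → X, ℝ) :=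
  ContinuousMap.compRightAlgHom ℝ ℝ ⟨fun φ => φ ∘ σ, by fun_prop⟩

/-- The interaction `a (φ x) · a (φ y)` of the spins at `x` and `y`, where `a` lists the real
components of a spin. -/
def siteCoupling (a : κ → C(X, ℝ)) (x y : ι) : C(ι → X, ℝ) :=
  ∑ k, siteFun x (a k) * siteFun y (a k)

/-- The negative `∑ₓ ∑ᵧ J x y a (φ x) · a (φ y)` of the energy of a spin configuration with
coupling constants `J`; the sum runs over ordered pairs. -/
def pairEnergy [Fintype ι] (a : κ → C(X, ℝ)) (J : ι → ι → ℝ) : C(ι → X, ℝ) :=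
  ∑ x, ∑ y, J x y • siteCoupling a x y

@[simp]
lemma siteFun_apply (x : ι) (g : C(X, ℝ)) (φ : ι → X) : siteFun x g φ = g (φ x) := rfl

@[simp]
lemma reindex_apply (σ : ι → ι) (f : C(ι → X, ℝ)) (φ : ι → X) : reindex σ f φ = f (φ ∘ σ) := rfl

lemma siteCoupling_comm (a : κ → C(X, ℝ)) (x y : ι) : siteCoupling a x y = siteCoupling a y x := by
  simp only [siteCoupling, mul_comm]

lemma reindex_pairEnergy [Fintype ι] (a : κ → C(X, ℝ)) (J : ι → ι → ℝ) (σ : Equiv.Perm ι) :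
    reindex σ (pairEnergy a J) = pairEnergy a fun x y => J (σ.symm x) (σ.symm y) := by
  have hcoupling (x y : ι) : reindex σ (siteCoupling a x y) = siteCoupling a (σ x) (σ y) := by
    simp only [siteCoupling, map_sum, map_mul]; rfl
  simp only [pairEnergy, map_sum, map_smul, hcoupling]
  refine .trans (Finset.sum_congr rfl fun x _ => ?_) (Equiv.sum_comp σ _)
  refine .trans (Finset.sum_congr rfl fun y _ => ?_) (Equiv.sum_comp σ _)
  simp only [Equiv.symm_apply_apply]

section Griffiths

variable [Fintype ι]

/-- The map `(gₓ)ₓ ↦ (φ ↦ ∏ₓ gₓ (φ x))`. -/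
def siteProd : (ι → C(X, ℝ)) →* C(ι → X, ℝ) where
  toFun g := ∏ x, siteFun x (g x)
  map_one' := by simp
  map_mul' g h := by simp [Finset.prod_mul_distrib]

/-- The products over the sites of one-site observables taken from `M`. -/
def siteProducts (ι : Type*) [Fintype ι] (M : Submonoid C(X, ℝ)) : Submonoid C(ι → X, ℝ) :=
  (Submonoid.pi Set.univ fun _ => M).map siteProd

lemma siteFun_mem_siteProducts {M : Submonoid C(X, ℝ)} {g : C(X, ℝ)} (hg : g ∈ M) (x : ι) :
    siteFun x g ∈ siteProducts ι M := by
  classical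
  refine ⟨Pi.mulSingle x g, fun y _ => ?_, ?_⟩
  · obtain rfl | hy := eq_or_ne y x
    · simpa using hg
    · simp [hy]
  · refine (Finset.prod_eq_single x (fun y _ hy => ?_) (by simp)).trans ?_ <;> simp [*]

variable [CompactSpace X] [MeasurableSpace X] [BorelSpace X] [SecondCountableTopology X]
  {ν : Measure X} [IsProbabilityMeasure ν] {M : Submonoid C(X, ℝ)}

theorem integral_mul_exp_pairEnergy_nonneg (hM : ∀ g ∈ M, 0 ≤ ∫ s, g s ∂ν) {a : κ → C(X, ℝ)}
    (ha : ∀ k, a k ∈ M) {J : ι → ι → ℝ} (hJ : ∀ x y, 0 ≤ J x y) {f : C(ι → X, ℝ)}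
    (hf : f ∈ siteProducts ι M) :
    0 ≤ ∫ φ, f φ * Real.exp (pairEnergy a J φ) ∂Measure.pi fun _ => ν := by
  have hprod : ∀ f ∈ siteProducts ι M, 0 ≤ ∫ φ, f φ ∂Measure.pi fun _ => ν := by
    rintro _ ⟨g, hg, rfl⟩
    simp only [siteProd, MonoidHom.coe_mk, OneHom.coe_mk, ContinuousMap.prod_apply, siteFun_apply,
      integral_fintype_prod_eq_prod]
    exact Finset.prod_nonneg fun x _ => hM _ (hg x (Set.mem_univ x))
  have hsite (x : ι) (k : κ) : siteFun x (a k) ∈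
      Algebra.adjoin ℝ≥0 (siteProducts ι M : Set C(ι → X, ℝ)) :=
    Algebra.subset_adjoin (siteFun_mem_siteProducts (ha k) x)
  exact integral_mul_exp_nonneg_of_mem_adjoin hprod (Algebra.subset_adjoin hf)
    (sum_mem fun x _ => sum_mem fun y _ => smul_mem_adjoin_of_nonneg (hJ x y)
      (sum_mem fun k _ => mul_mem (hsite x k) (hsite y k)))

end Griffiths

end SpinSystem

/-- A reflection of `ι` exchanging two halves which overlap only in fixed points; `half` is one of
the two, and the other is its image. -/
structure HalfReflection (ι : Type*) where
  map : ι → ι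
  half : Set ι
  involutive : Function.Involutive map
  mem_half_or_map_mem_half (x : ι) : x ∈ half ∨ map x ∈ half
  map_eq_self {x : ι} : x ∈ half → map x ∈ half → map x = x

namespace HalfReflection

/-- The pairs whose coupling is compatible with reflection positivity: those joining a point to its
mirror image, and those contained in one of the two halves. -/
def AllowsCoupling {ι : Type*} (θ : HalfReflection ι) (x y : ι) : Prop :=
  y = θ.map x ∨ (x ∈ θ.half ∧ y ∈ θ.half) ∨ (θ.map x ∈ θ.half ∧ θ.map y ∈ θ.half)

lemma AllowsCoupling.symm {ι : Type*} {θ : HalfReflection ι} {x y : ι}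
    (h : θ.AllowsCoupling x y) : θ.AllowsCoupling y x := by
  obtain rfl | h | h := h
  exacts [.inl (θ.involutive x).symm, .inr (.inl h.symm), .inr (.inr h.symm)]

end HalfReflection

section ReflectionPositivity

variable {ι κ X : Type*} [Fintype κ] [TopologicalSpace X]

/-- The continuous observables depending only on the spins in `s`. -/
def obsOn (X : Type*) [TopologicalSpace X] (s : Set ι) : Subalgebra ℝ C(ι → X, ℝ) where
  carrier := {h | DependsOn h s}
  mul_mem' hf hg _ _ h := congr_arg₂ (· * ·) (hf h) (hg h)
  add_mem' hf hg _ _ h := congr_arg₂ (· + ·) (hf h) (hg h)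
  algebraMap_mem' _ _ _ _ := rfl

lemma siteFun_mem_obsOn {s : Set ι} {x : ι} (hx : x ∈ s) (g : C(X, ℝ)) : siteFun x g ∈ obsOn X s :=
  fun _ _ h => congr_arg g (h x hx)

/-- `K` keeps the couplings inside the half, except that a coupling between two fixed points is
shared equally with the reflected side. -/
lemma HalfReflection.exists_coupling_splitting [DecidableEq ι] (θ : HalfReflection ι)
    {J : ι → ι → ℝ} (hJθ : ∀ x y, J (θ.map x) (θ.map y) = J x y)
    (hJallowed : ∀ x y, J x y ≠ 0 → θ.AllowsCoupling x y) :
    ∃ K : ι → ι → ℝ, (∀ x y, K x y ≠ 0 → x ∈ θ.half ∧ y ∈ θ.half) ∧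
      ∀ x y, J x y = K x y + K (θ.map x) (θ.map y) + if y = θ.map x then J x y else 0 := by
  classical
  refine ⟨fun x y => if y ≠ θ.map x ∧ x ∈ θ.half ∧ y ∈ θ.half then
    if θ.map x ∈ θ.half ∧ θ.map y ∈ θ.half then J x y / 2 else J x y else 0,
    fun x y => by grind, fun x y => ?_⟩
  have hmap : θ.map y = x ↔ y = θ.map x := θ.involutive.eq_iff
  unfold HalfReflection.AllowsCoupling at hJallowed
  simp only [θ.involutive x, θ.involutive y, hJθ, ne_eq, hmap]
  grind

/-- The products `h · θh`, where `θh` is the reflection of an observable `h` of the half. -/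
def reflectionSquares (X : Type*) [TopologicalSpace X] (θ : HalfReflection ι) :
    Submonoid C(ι → X, ℝ) :=
  (obsOn X θ.half).toSubmonoid.map
    (MonoidHom.id _ * MonoidHomClass.toMonoidHom (reindex (X := X) θ.map))

lemma siteCoupling_map_mem_adjoin (θ : HalfReflection ι) (a : κ → C(X, ℝ)) (x : ι) :
    siteCoupling a x (θ.map x) ∈ Algebra.adjoin ℝ≥0 (reflectionSquares X θ : Set C(ι → X, ℝ)) := by
  have hmem {x : ι} (hx : x ∈ θ.half) : siteCoupling a x (θ.map x) ∈
      Algebra.adjoin ℝ≥0 (reflectionSquares X θ : Set C(ι → X, ℝ)) :=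
    sum_mem fun k _ => Algebra.subset_adjoin ⟨siteFun x (a k), siteFun_mem_obsOn hx _, rfl⟩
  obtain hx | hx := θ.mem_half_or_map_mem_half x
  · exact hmem hx
  · simpa only [θ.involutive x, siteCoupling_comm a _ x] using hmem hx

variable [Fintype ι] [CompactSpace X] [MeasurableSpace X] [BorelSpace X]
  [SecondCountableTopology X] (ν : Measure X) [IsProbabilityMeasure ν] (θ : HalfReflection ι)

lemma continuous_set_piecewise {ι : Type*} {X : ι → Type*} [∀ i, TopologicalSpace (X i)]
    (s : Set ι) [∀ i, Decidable (i ∈ s)] :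
    Continuous fun p : (∀ i, X i) × (∀ i, X i) => s.piecewise p.1 p.2 := by
  refine continuous_pi fun i => ?_
  by_cases hi : i ∈ s <;> simp only [hi, Set.piecewise_eq_of_mem, Set.piecewise_eq_of_notMem,
    not_false_eq_true] <;> fun_prop

/-- Conditionally on the spins at the fixed points, `h` and its reflection are independent and have
the same law. -/
theorem integral_mul_reindex_nonneg {h : C(ι → X, ℝ)} (hh : h ∈ obsOn X θ.half) :
    0 ≤ ∫ φ, (h * reindex θ.map h) φ ∂Measure.pi fun _ => ν := by
  classical
  set F := {x | x ∈ θ.half ∧ θ.map x ∈ θ.half} with hF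
  have hglue := measurePreserving_set_piecewise (fun _ : ι => ν) F
  have hcont : Continuous fun p : (ι → X) × (ι → X) => F.piecewise p.1 p.2 :=
    continuous_set_piecewise F
  have hsq (ξ : ι → X) : 0 ≤ ∫ ψ, h (F.piecewise ξ ψ) * h (F.piecewise ξ ψ ∘ θ.map)
      ∂Measure.pi fun _ => ν := by
    set g : (ι → X) → ℝ := fun ψ => h (F.piecewise ξ ψ)
    have hgc : Continuous g := h.continuous.comp (hcont.comp (.prodMk_right ξ))
    have hreflect (ψ : ι → X) : h (F.piecewise ξ ψ ∘ θ.map) = g (ψ ∘ θ.map) := by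
      refine hh fun x hx => ?_
      by_cases hθx : θ.map x ∈ θ.half
      · simp [hF, hx, θ.map_eq_self hx hθx]
      · simp [hF, hθx]
    have hg : DependsOn g (θ.half \ F) := fun ψ ψ' hψ => hh fun x hx => by
      by_cases hxF : x ∈ F <;> simp [hxF, hψ x, hx]
    have hgθ : DependsOn (fun ψ => g (ψ ∘ θ.map)) (θ.half \ F)ᶜ := fun ψ ψ' hψ =>
      hg fun x hx => hψ _ fun hθx => hx.2 ⟨hx.1, hθx.1⟩
    calc 0 ≤ (∫ ψ, g ψ ∂Measure.pi fun _ => ν) * ∫ ψ, g ψ ∂Measure.pi fun _ => ν :=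
          mul_self_nonneg _
      _ = (∫ ψ, g ψ ∂Measure.pi fun _ => ν) * ∫ ψ, g (ψ ∘ θ.map) ∂Measure.pi fun _ => ν :=
          congr_arg _ (integral_comp_of_measurePreserving
            (measurePreserving_comp_perm ν θ.involutive.toPerm) hgc.aestronglyMeasurable).symm
      _ = ∫ ψ, g ψ * g (ψ ∘ θ.map) ∂Measure.pi fun _ => ν :=
          (integral_mul_of_dependsOn_compl _ hg hgθ hgc.measurable
            (hgc.comp (by fun_prop)).measurable).symm
      _ = _ := by simp only [hreflect, g]
  rw [← integral_comp_of_measurePreserving hglue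
    (ContinuousMap.continuous _).aestronglyMeasurable, integral_prod]
  · exact integral_nonneg hsq
  · exact integrable_of_continuous_of_compactSpace ((ContinuousMap.continuous _).comp hcont)

lemma integral_mul_exp_reflected_nonneg (a : κ → C(X, ℝ)) {h A : C(ι → X, ℝ)}
    (hh : h ∈ obsOn X θ.half) (hA : A ∈ obsOn X θ.half) {c : ι → ℝ} (hc : ∀ x, 0 ≤ c x) :
    0 ≤ ∫ φ, (h * reindex θ.map h) φ * Real.exp
      ((A + reindex θ.map A + ∑ x, c x • siteCoupling a x (θ.map x)) φ)
      ∂Measure.pi fun _ => ν := by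
  set g : C(ι → X, ℝ) := h * ⟨fun φ => Real.exp (A φ), by fun_prop⟩
  have hg : g ∈ obsOn X θ.half := mul_mem hh fun _ _ hφ => congr_arg Real.exp (hA hφ)
  have hsquare : ∀ f ∈ reflectionSquares X θ, 0 ≤ ∫ φ, f φ ∂Measure.pi fun _ => ν := by
    rintro _ ⟨f, hf, rfl⟩
    exact integral_mul_reindex_nonneg ν θ hf
  have hcross : ∑ x, c x • siteCoupling a x (θ.map x) ∈
      Algebra.adjoin ℝ≥0 (reflectionSquares X θ : Set C(ι → X, ℝ)) :=
    sum_mem fun x _ => smul_mem_adjoin_of_nonneg (hc x) (siteCoupling_map_mem_adjoin θ a x)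
  have hpos := integral_mul_exp_nonneg_of_mem_adjoin hsquare
    (Algebra.subset_adjoin ⟨g, hg, rfl⟩) hcross
  refine hpos.trans_eq (integral_congr_ae (.of_forall fun φ => ?_))
  simp only [MonoidHom.mul_apply, MonoidHom.id_apply, MonoidHom.coe_coe, map_mul,
    ContinuousMap.mul_apply, ContinuousMap.coe_mk, reindex_apply, ContinuousMap.add_apply,
    Real.exp_add, g]
  ring

theorem integral_mul_reindex_mul_exp_pairEnergy_nonneg (a : κ → C(X, ℝ)) {J : ι → ι → ℝ}
    (hJ : ∀ x y, 0 ≤ J x y) (hJθ : ∀ x y, J (θ.map x) (θ.map y) = J x y)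
    (hJallowed : ∀ x y, J x y ≠ 0 → θ.AllowsCoupling x y)
    {h : C(ι → X, ℝ)} (hh : h ∈ obsOn X θ.half) :
    0 ≤ ∫ φ, (h * reindex θ.map h) φ * Real.exp (pairEnergy a J φ) ∂Measure.pi fun _ => ν := by
  classical
  obtain ⟨K, hKhalf, hK⟩ := θ.exists_coupling_splitting hJθ hJallowed
  have hKobs : pairEnergy a K ∈ obsOn X θ.half := sum_mem fun x _ => sum_mem fun y _ => by
    by_cases hxy : K x y = 0
    · simp [hxy]
    · exact Subalgebra.smul_mem _ (sum_mem fun k _ => mul_mem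
        (siteFun_mem_obsOn (hKhalf x y hxy).1 _) (siteFun_mem_obsOn (hKhalf x y hxy).2 _)) _
  have hreflected : reindex θ.map (pairEnergy a K) =
      pairEnergy a fun x y => K (θ.map x) (θ.map y) :=
    reindex_pairEnergy a K θ.involutive.toPerm
  have henergy : pairEnergy a J = pairEnergy a K + reindex θ.map (pairEnergy a K) +
      ∑ x, J x (θ.map x) • siteCoupling a x (θ.map x) := by
    rw [hreflected]
    simp only [pairEnergy, ← Finset.sum_add_distrib]
    refine Finset.sum_congr rfl fun x _ => ?_
    conv_lhs => enter [2, y]; rw [hK x y, add_smul, add_smul, ite_smul, zero_smul]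
    simp [Finset.sum_add_distrib]
  rw [henergy]
  exact integral_mul_exp_reflected_nonneg ν θ a hh hKobs fun x => hJ x _

end ReflectionPositivity

section Sphere

open scoped Pointwise

section Isometry

variable {E : Type*} [NormedAddCommGroup E] [NormedSpace ℝ E]

/-- The action of a linear isometry on the unit sphere. -/
def sphereMap (e : E ≃ₗᵢ[ℝ] E) : C(sphere (0 : E) 1, sphere (0 : E) 1) :=
  ⟨fun v => ⟨e v, by simp⟩, by fun_prop⟩

@[simp]
lemma coe_sphereMap (e : E ≃ₗᵢ[ℝ] E) (v : sphere (0 : E) 1) : (sphereMap e v : E) = e v := rfl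

variable [MeasurableSpace E] [BorelSpace E]

lemma measurePreserving_sphereMap_toSphere {μ : Measure E} {e : E ≃ₗᵢ[ℝ] E}
    (he : MeasurePreserving e μ μ) : MeasurePreserving (sphereMap e) μ.toSphere μ.toSphere := by
  have hm : Measurable (sphereMap e) := (sphereMap e).continuous.measurable
  refine ⟨hm, Measure.ext fun s hs => ?_⟩
  have hsector : Set.Ioo (0 : ℝ) 1 • ((↑) '' (sphereMap e ⁻¹' s) : Set E) =
      e ⁻¹' (Set.Ioo (0 : ℝ) 1 • ((↑) '' s)) := by
    ext v
    simp only [Set.mem_smul, Set.mem_image, Set.mem_preimage]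
    constructor
    · rintro ⟨r, hr, _, ⟨u, hu, rfl⟩, rfl⟩
      exact ⟨r, hr, _, ⟨_, hu, rfl⟩, by simp⟩
    · rintro ⟨r, hr, _, ⟨u, hu, rfl⟩, huv⟩
      have hsymm : sphereMap e (sphereMap e.symm u) = u := Subtype.ext (by simp)
      exact ⟨r, hr, _, ⟨sphereMap e.symm u, by rwa [hsymm], rfl⟩, e.injective (by simpa using huv)⟩
  rw [Measure.map_apply hm hs, Measure.toSphere_apply' _ (hm hs), Measure.toSphere_apply' _ hs,
    hsector, he.measure_preimage_emb e.toHomeomorph.measurableEmbedding]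

end Isometry

variable {N : ℕ}

lemma measurePreserving_sphereMap
    (e : EuclideanSpace ℝ (Fin N) ≃ₗᵢ[ℝ] EuclideanSpace ℝ (Fin N)) :
    MeasurePreserving (sphereMap e) (sphereUniform N) (sphereUniform N) :=
  (measurePreserving_sphereMap_toSphere e.measurePreserving).smul_measure _

instance [NeZero N] : IsProbabilityMeasure (sphereUniform N) where
  measure_univ := ENNReal.inv_mul_cancel
    (Measure.measure_univ_ne_zero.2 (Measure.toSphere_ne_zero _)) (measure_ne_top _ _)

/-- The `k`-th component of a spin. -/
def spinCoord (k : Fin N) : C(SpinSphere N, ℝ) :=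
  ⟨fun v => (v : EuclideanSpace ℝ (Fin N)) k, by fun_prop⟩

@[simp]
lemma spinCoord_apply (k : Fin N) (v : SpinSphere N) :
    spinCoord k v = (v : EuclideanSpace ℝ (Fin N)) k := rfl

/-- A monomial with an odd exponent is odd under the sign flip of that coordinate. -/
lemma integral_nonneg_of_mem_closure_spinCoord {g : C(SpinSphere N, ℝ)}
    (hg : g ∈ Submonoid.closure (Set.range (spinCoord (N := N)))) :
    0 ≤ ∫ v, g v ∂sphereUniform N := by
  obtain ⟨n, rfl⟩ := Submonoid.exists_of_mem_closure_range _ _ hg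
  by_cases hn : ∀ k, Even (n k)
  · refine integral_nonneg fun v => ?_
    simpa using Finset.prod_nonneg fun k _ => (hn k).pow_nonneg _
  · push Not at hn
    obtain ⟨j, hj⟩ := hn
    set m : C(SpinSphere N, ℝ) := ∏ k, spinCoord k ^ n k
    let signFlip : EuclideanSpace ℝ (Fin N) ≃ₗᵢ[ℝ] EuclideanSpace ℝ (Fin N) :=
      .piLpCongrRight 2 (Function.update (fun _ => .refl ℝ ℝ) j (.neg ℝ))
    have hflip (v : SpinSphere N) : m (sphereMap signFlip v) = -m v := by
      have hm (w : SpinSphere N) : m w = spinCoord j w ^ n j * ∏ k ∈ {j}ᶜ, spinCoord k w ^ n k := by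
        simp [m, Fintype.prod_eq_mul_prod_compl j]
      have hon : spinCoord j (sphereMap signFlip v) = -spinCoord j v := by simp [signFlip]
      have hoff : ∀ k ∈ ({j} : Finset (Fin N))ᶜ, spinCoord k (sphereMap signFlip v) ^ n k =
          spinCoord k v ^ n k := fun k hk => by simp_all [signFlip]
      rw [hm, hm, hon, Finset.prod_congr rfl hoff, (Nat.not_even_iff_odd.1 hj).neg_pow, neg_mul]
    have hint := integral_comp_of_measurePreserving (measurePreserving_sphereMap signFlip)
      m.continuous.aestronglyMeasurable
    simp only [hflip, integral_neg] at hint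
    linarith

end Sphere

section Gibbs

variable {d L N : ℕ} {β : ℝ}

/-- The coupling constants for which `pairEnergy` is `-β` times the Hamiltonian: every edge is
counted twice. -/
noncomputable def edgeCoupling (d L : ℕ) (β : ℝ) (x y : TorusPt d L) : ℝ :=
  if torusAdj x y then β / 2 else 0

lemma edgeCoupling_nonneg (hβ : 0 ≤ β) (x y : TorusPt d L) : 0 ≤ edgeCoupling d L β x y := by
  unfold edgeCoupling
  split_ifs <;> positivity

lemma torusAdj_add_right_iff (x y u : TorusPt d L) :
    torusAdj (x + u) (y + u) ↔ torusAdj x y := by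
  have hupdate (j : Fin d) (t : ZMod L) :
      Function.update (x + u) j ((x + u) j + t) = Function.update x j (x j + t) + u := by
    ext k
    obtain rfl | hk := eq_or_ne k j
    · simp [add_right_comm]
    · simp [hk]
  simp only [torusAdj, sub_eq_add_neg, hupdate, add_left_inj]

variable [NeZero L]

lemma neg_mul_hamiltonian (φ : SpinCfg d L N) :
    -β * hamiltonian φ = pairEnergy spinCoord (edgeCoupling d L β) φ := by
  simp only [hamiltonian, pairEnergy, siteCoupling, edgeCoupling, ContinuousMap.sum_apply,
    ContinuousMap.smul_apply, ContinuousMap.mul_apply, siteFun_apply, spinCoord_apply,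
    PiLp.inner_apply, RCLike.inner_apply, conj_trivial, Finset.mul_sum, smul_eq_mul]
  refine Finset.sum_congr rfl fun x _ => Finset.sum_congr rfl fun y _ => ?_
  split_ifs
  · simp only [Finset.mul_sum]
    exact Finset.sum_congr rfl fun k _ => by ring
  · simp

lemma continuous_neg_mul_hamiltonian (β : ℝ) :
    Continuous fun φ : SpinCfg d L N => -β * hamiltonian φ := by
  simp only [neg_mul_hamiltonian]
  fun_prop

/-- The Gibbs measure of the spin system on the torus at inverse temperature `β`. -/
noncomputable def gibbsMeasure (d L N : ℕ) [NeZero L] (β : ℝ) : Measure (SpinCfg d L N) :=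
  (spinMeasure d L N).tilted fun φ => -β * hamiltonian φ

lemma gibbsExp_eq_integral (f : SpinCfg d L N → ℝ) :
    gibbsExp d L N β f = ∫ φ, f φ ∂gibbsMeasure d L N β := by
  rw [gibbsExp, gibbsMeasure, integral_tilted, ← integral_const_mul]
  simp only [smul_eq_mul]
  congr! 2
  ring

lemma integral_gibbsMeasure_nonneg {f : SpinCfg d L N → ℝ}
    (hf : 0 ≤ ∫ φ, f φ * Real.exp (pairEnergy spinCoord (edgeCoupling d L β) φ)
      ∂Measure.pi fun _ => sphereUniform N) :
    0 ≤ ∫ φ, f φ ∂gibbsMeasure d L N β := by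
  rw [← gibbsExp_eq_integral, gibbsExp]
  simp only [neg_mul_hamiltonian]
  exact mul_nonneg (inv_nonneg.2 (integral_nonneg fun _ => (Real.exp_pos _).le)) hf

lemma measurePreserving_gibbsMeasure {T : SpinCfg d L N → SpinCfg d L N}
    (hT : MeasurePreserving T (spinMeasure d L N) (spinMeasure d L N))
    (hH : ∀ φ, hamiltonian (T φ) = hamiltonian φ) :
    MeasurePreserving T (gibbsMeasure d L N β) (gibbsMeasure d L N β) := by
  simpa only [gibbsMeasure, Function.comp_def, hH] using
    measurePreserving_tilted hT (continuous_neg_mul_hamiltonian β).measurable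

variable [NeZero N]

instance : IsProbabilityMeasure (spinMeasure d L N) :=
  inferInstanceAs (IsProbabilityMeasure (Measure.pi fun _ => sphereUniform N))

instance : IsProbabilityMeasure (gibbsMeasure d L N β) :=
  isProbabilityMeasure_tilted (integrable_of_continuous_of_compactSpace
    (continuous_neg_mul_hamiltonian β).rexp)

lemma measurePreserving_gibbsMeasure_comp_perm {σ : Equiv.Perm (TorusPt d L)}
    (hσ : ∀ x y, torusAdj (σ x) (σ y) ↔ torusAdj x y) :
    MeasurePreserving (fun φ : SpinCfg d L N => φ ∘ σ) (gibbsMeasure d L N β)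
      (gibbsMeasure d L N β) := by
  refine measurePreserving_gibbsMeasure (measurePreserving_comp_perm _ σ) fun φ => ?_
  simp only [hamiltonian, Function.comp_apply]
  congr 1
  refine .trans (Finset.sum_congr rfl fun x _ => ?_) (Equiv.sum_comp σ _)
  refine .trans (Finset.sum_congr rfl fun y _ => ?_) (Equiv.sum_comp σ _)
  simp only [hσ]

lemma measurePreserving_gibbsMeasure_sphereMap
    (e : EuclideanSpace ℝ (Fin N) ≃ₗᵢ[ℝ] EuclideanSpace ℝ (Fin N)) :
    MeasurePreserving (fun (φ : SpinCfg d L N) x => sphereMap e (φ x)) (gibbsMeasure d L N β)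
      (gibbsMeasure d L N β) :=
  measurePreserving_gibbsMeasure
    (measurePreserving_pi _ _ fun _ => measurePreserving_sphereMap e)
    fun φ => by simp only [hamiltonian, coe_sphereMap, LinearIsometryEquiv.inner_map_map]

lemma integral_sq_spinCoord (k : Fin N) (x : TorusPt d L) :
    ∫ φ, spinCoord k (φ x) ^ 2 ∂gibbsMeasure d L N β = 1 / N := by
  have hswap (k l : Fin N) : ∫ φ, spinCoord k (φ x) ^ 2 ∂gibbsMeasure d L N β =
      ∫ φ, spinCoord l (φ x) ^ 2 ∂gibbsMeasure d L N β := by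
    rw [← integral_comp_of_measurePreserving (measurePreserving_gibbsMeasure_sphereMap
      (.piLpCongrLeft 2 ℝ ℝ (Equiv.swap k l))) (f := fun φ => spinCoord k (φ x) ^ 2)
      (Continuous.aestronglyMeasurable (by fun_prop))]
    simp [LinearIsometryEquiv.piLpCongrLeft_apply, Equiv.piCongrLeft'_apply]
  have hsum : ∑ l : Fin N, ∫ φ, spinCoord l (φ x) ^ 2 ∂gibbsMeasure d L N β = 1 := by
    rw [← integral_finsetSum _ fun l _ => integrable_of_continuous_of_compactSpace (by fun_prop)]
    simp [← EuclideanSpace.real_norm_sq_eq]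
  simp only [← hswap k, Finset.sum_const, Finset.card_univ, Fintype.card_fin, nsmul_eq_mul] at hsum
  exact eq_one_div_of_mul_eq_one_right hsum

lemma corrOne_eq_integral (x y : TorusPt d L) : corrOne d L N β x y =
    ∫ φ, (siteFun x (spinCoord 0) * siteFun y (spinCoord 0) : C(SpinCfg d L N, ℝ)) φ
      ∂gibbsMeasure d L N β :=
  gibbsExp_eq_integral _

lemma corrOne_self (x : TorusPt d L) : corrOne d L N β x x = 1 / N := by
  rw [corrOne_eq_integral, ← integral_sq_spinCoord (β := β) 0 x]
  simp [sq]

lemma corrOne_comm (x y : TorusPt d L) : corrOne d L N β x y = corrOne d L N β y x := by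
  simp only [corrOne_eq_integral, mul_comm]

lemma corrOne_map_perm {σ : Equiv.Perm (TorusPt d L)}
    (hσ : ∀ x y, torusAdj (σ x) (σ y) ↔ torusAdj x y) (x y : TorusPt d L) :
    corrOne d L N β (σ x) (σ y) = corrOne d L N β x y := by
  simp only [corrOne_eq_integral, ← integral_comp_of_measurePreserving
    (measurePreserving_gibbsMeasure_comp_perm hσ) (ContinuousMap.continuous
      (siteFun x (spinCoord 0) * siteFun y (spinCoord 0))).aestronglyMeasurable]
  rfl

lemma corrOne_add_right (x y u : TorusPt d L) :
    corrOne d L N β (x + u) (y + u) = corrOne d L N β x y :=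
  corrOne_map_perm (σ := Equiv.addRight u) (fun x y => torusAdj_add_right_iff x y u) x y

lemma corrOne_zero_sub (x y : TorusPt d L) :
    corrOne d L N β 0 (x - y) = corrOne d L N β x y := by
  rw [← corrOne_add_right 0 (x - y) y, zero_add, sub_add_cancel, corrOne_comm]

lemma corrOne_nonneg (hβ : 0 ≤ β) (x y : TorusPt d L) : 0 ≤ corrOne d L N β x y := by
  have hcoord (k : Fin N) : spinCoord k ∈ Submonoid.closure (Set.range (spinCoord (N := N))) :=
    Submonoid.subset_closure ⟨k, rfl⟩
  rw [corrOne_eq_integral]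
  exact integral_gibbsMeasure_nonneg (integral_mul_exp_pairEnergy_nonneg
    (fun _ => integral_nonneg_of_mem_closure_spinCoord) hcoord (edgeCoupling_nonneg hβ)
    (mul_mem (siteFun_mem_siteProducts (hcoord 0) x) (siteFun_mem_siteProducts (hcoord 0) y)))

/-- Reflection positivity for the observable `φ_u^1 - φ_v^1`. -/
lemma two_mul_corrOne_map_le (hβ : 0 ≤ β) {θ : HalfReflection (TorusPt d L)}
    (hadj : ∀ x y, torusAdj (θ.map x) (θ.map y) ↔ torusAdj x y)
    (hallowed : ∀ x y, torusAdj x y → θ.AllowsCoupling x y)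
    {u v : TorusPt d L} (hu : u ∈ θ.half) (hv : v ∈ θ.half) :
    2 * corrOne d L N β u (θ.map v) ≤
      corrOne d L N β u (θ.map u) + corrOne d L N β v (θ.map v) := by
  have hpos := integral_gibbsMeasure_nonneg (integral_mul_reindex_mul_exp_pairEnergy_nonneg
    (sphereUniform N) θ spinCoord (edgeCoupling_nonneg hβ)
    (fun x y => by simp only [edgeCoupling, hadj])
    (fun x y hxy => hallowed x y (by contrapose! hxy; exact if_neg hxy))
    (sub_mem (siteFun_mem_obsOn hu (spinCoord 0)) (siteFun_mem_obsOn hv (spinCoord 0))))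
  have hreindex (x : TorusPt d L) : reindex θ.map (siteFun x (spinCoord (0 : Fin N))) =
      siteFun (θ.map x) (spinCoord 0) := rfl
  have hsymm : corrOne d L N β v (θ.map u) = corrOne d L N β u (θ.map v) := by
    rw [← corrOne_map_perm (σ := θ.involutive.toPerm) hadj, corrOne_comm]
    simp only [Function.Involutive.coe_toPerm, θ.involutive u]
  rw [map_sub, hreindex, hreindex, sub_mul, mul_sub, mul_sub] at hpos
  simp only [ContinuousMap.sub_apply] at hpos
  rw [integral_sub, integral_sub, integral_sub] at hpos
  · simp only [← corrOne_eq_integral, hsymm] at hpos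
    linarith
  all_goals exact integrable_of_continuous_of_compactSpace (by fun_prop)

end Gibbs

section TriangleInequality

variable {d L N : ℕ} [NeZero L] [NeZero N] {β : ℝ}

/-- The first spin component at a site, as a vector of the `L²` space of the Gibbs measure. -/
noncomputable def spinVec (N : ℕ) [NeZero N] (β : ℝ) (x : TorusPt d L) :
    Lp ℝ 2 (gibbsMeasure d L N β) :=
  ContinuousMap.toLp 2 _ ℝ (siteFun x (spinCoord 0))

lemma inner_spinVec (x y : TorusPt d L) :
    ⟪spinVec N β x, spinVec N β y⟫ = corrOne d L N β x y := by
  rw [spinVec, spinVec, ContinuousMap.inner_toLp, corrOne_comm, corrOne_eq_integral]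
  rfl

lemma dist_spinVec_sq (x y : TorusPt d L) :
    dist (spinVec N β x) (spinVec N β y) ^ 2 = 2 * (1 / N - corrOne d L N β x y) := by
  rw [dist_eq_norm, norm_sub_sq_real, ← real_inner_self_eq_norm_sq, ← real_inner_self_eq_norm_sq]
  simp only [inner_spinVec, corrOne_self]
  ring

lemma corrOne_le_one_div (x y : TorusPt d L) : corrOne d L N β x y ≤ 1 / N := by
  linarith [dist_spinVec_sq (N := N) (β := β) x y, sq_nonneg (dist (spinVec N β x) (spinVec N β y))]

lemma dist_spinVec_add_right (x y u : TorusPt d L) :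
    dist (spinVec N β (x + u)) (spinVec N β (y + u)) = dist (spinVec N β x) (spinVec N β y) := by
  rw [← sq_eq_sq₀ dist_nonneg dist_nonneg, dist_spinVec_sq, dist_spinVec_sq, corrOne_add_right]

lemma dist_spinVec_zero_sum_le {ι : Type*} (s : Finset ι) (g : ι → TorusPt d L) :
    dist (spinVec N β 0) (spinVec N β (∑ i ∈ s, g i)) ≤
      ∑ i ∈ s, dist (spinVec N β 0) (spinVec N β (g i)) := by
  set f : TorusPt d L → ℝ := fun u => dist (spinVec N β 0) (spinVec N β u) with hf
  have hzero : f 0 ≤ 0 := (dist_self (spinVec N β 0)).le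
  have hadd (u v : TorusPt d L) : f (u + v) ≤ f u + f v := by
    have htranslate := dist_spinVec_add_right (N := N) (β := β) 0 u v
    rw [zero_add] at htranslate
    simpa only [hf, ← htranslate, add_comm] using
      dist_triangle (spinVec N β 0) (spinVec N β v) (spinVec N β (u + v))
  exact Finset.le_sum_of_subadditive f hzero hadd s g

lemma one_div_sub_card_sq_mul_le_corrOne_sum {ι : Type*} {s : Finset ι} {g : ι → TorusPt d L}
    {δ : ℝ} (hδ : 0 ≤ δ) (hg : ∀ i ∈ s, 1 / N - δ ≤ corrOne d L N β 0 (g i)) :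
    1 / N - (s.card : ℝ) ^ 2 * δ ≤ corrOne d L N β 0 (∑ i ∈ s, g i) := by
  have hterm : ∀ i ∈ s, dist (spinVec N β 0) (spinVec N β (g i)) ≤ √(2 * δ) := fun i hi =>
    Real.le_sqrt_of_sq_le (by linarith [hg i hi, dist_spinVec_sq (N := N) (β := β) 0 (g i)])
  have hdist : dist (spinVec N β 0) (spinVec N β (∑ i ∈ s, g i)) ≤ s.card * √(2 * δ) :=
    (dist_spinVec_zero_sum_le s g).trans
      ((Finset.sum_le_card_nsmul s _ _ hterm).trans_eq (nsmul_eq_mul _ _))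
  have hsq := pow_le_pow_left₀ dist_nonneg hdist 2
  rw [dist_spinVec_sq, mul_pow, Real.sq_sqrt (by positivity)] at hsq
  linarith

end TriangleInequality

section AxisReflection

variable {d L : ℕ}

namespace HalfReflection

/-- The reflection acting by `θ` on the `i`-th coordinate. -/
def onCoord {ι α : Type*} [DecidableEq ι] (θ : HalfReflection α) (i : ι) :
    HalfReflection (ι → α) where
  map x := Function.update x i (θ.map (x i))
  half := {x | x i ∈ θ.half}
  involutive x := by simp [θ.involutive (x i)]
  mem_half_or_map_mem_half x := by simpa using θ.mem_half_or_map_mem_half (x i)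
  map_eq_self {x} h h' := by simp [θ.map_eq_self h (by simpa using h')]

section OnCoord

variable {ι α : Type*} [DecidableEq ι] {θ : HalfReflection α} {i j : ι} {x : ι → α}

@[simp]
lemma onCoord_map_apply : (θ.onCoord i).map x = Function.update x i (θ.map (x i)) := rfl

@[simp]
lemma mem_onCoord_half : x ∈ (θ.onCoord i).half ↔ x i ∈ θ.half := Iff.rfl

lemma allowsCoupling_onCoord_update {t : α} (h : θ.AllowsCoupling (x j) t) :
    (θ.onCoord i).AllowsCoupling x (Function.update x j t) := by
  obtain rfl | hij := eq_or_ne i j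
  · obtain rfl | h | h := h
    · exact .inl rfl
    · exact .inr (.inl (by simpa using h))
    · exact .inr (.inr (by simpa using h))
  · obtain h | h := θ.mem_half_or_map_mem_half (x i)
    · exact .inr (.inl (by simpa [hij] using h))
    · exact .inr (.inr (by simpa [hij] using h))

end OnCoord

end HalfReflection

variable [NeZero L]

lemma zmod_val_add_one (a : ZMod L) : (a + 1).val = if a.val + 1 = L then 0 else a.val + 1 := by
  have ha := a.val_lt
  rw [ZMod.val_add, ZMod.val_one_eq_one_mod, Nat.add_mod_mod]
  split_ifs with h
  · rw [h, Nat.mod_self]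
  · exact Nat.mod_eq_of_lt (by omega)

lemma zmod_val_neg_add_natCast {a : ZMod L} {s : ℕ} (h : a.val + s ≤ L) :
    (-(a + s)).val = if a.val + s = 0 then 0 else L - s - a.val := by
  have hcast : -(a + s) = ((L - (a.val + s) : ℕ) : ZMod L) := by simp [Nat.cast_sub h]
  rw [hcast, ZMod.val_natCast]
  split_ifs with h0
  · simp [h0]
  · rw [Nat.mod_eq_of_lt (Nat.sub_lt (NeZero.pos L) (by omega)), Nat.add_comm, Nat.sub_add_eq]

/-- The reflection `a ↦ -(a + s)` of the cycle `ℤ/Lℤ`. For even `L` it is the reflection through the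
sites `0` and `L / 2` if `s = 0`, and through the edges `{-1, 0}` and `{L / 2 - 1, L / 2}` if
`s = 1`. -/
def cycleReflection {s : ℕ} (hs : s ≤ 1) : HalfReflection (ZMod L) where
  map a := -(a + s)
  half := {a | 2 * a.val + s ≤ L}
  involutive a := by simp
  mem_half_or_map_mem_half a := by
    have ha := a.val_lt
    simp only [Set.mem_ofPred_eq, zmod_val_neg_add_natCast (show a.val + s ≤ L by omega)]
    grind
  map_eq_self {a} h h' := by
    have ha := a.val_lt
    refine ZMod.val_injective L ?_
    simp only [Set.mem_ofPred_eq, zmod_val_neg_add_natCast (show a.val + s ≤ L by omega)] at h h' ⊢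
    grind

variable {s : ℕ} (hs : s ≤ 1)

lemma cycleReflection_map_apply (a : ZMod L) : (cycleReflection hs).map a = -(a + s) := rfl

lemma mem_cycleReflection_half {a : ZMod L} :
    a ∈ (cycleReflection hs).half ↔ 2 * a.val + s ≤ L := Iff.rfl

lemma cycleReflection_allowsCoupling_add_one (hL : Even L) (a : ZMod L) :
    (cycleReflection hs).AllowsCoupling a (a + 1) := by
  have ha := a.val_lt
  have ha' := (a + 1).val_lt
  simp only [HalfReflection.AllowsCoupling, mem_cycleReflection_half, cycleReflection_map_apply,
    ← (ZMod.val_injective L).eq_iff, zmod_val_neg_add_natCast (show a.val + s ≤ L by omega),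
    zmod_val_neg_add_natCast (show (a + 1).val + s ≤ L by omega), zmod_val_add_one]
  obtain ⟨m, rfl⟩ := hL
  split_ifs <;> omega

lemma allowsCoupling_onCoord_cycleReflection (hL : Even L) (i : Fin d) {x y : TorusPt d L}
    (hxy : torusAdj x y) : ((cycleReflection hs).onCoord i).AllowsCoupling x y := by
  obtain ⟨j, rfl | rfl⟩ := hxy
  · exact HalfReflection.allowsCoupling_onCoord_update
      (cycleReflection_allowsCoupling_add_one hs hL _)
  · refine HalfReflection.allowsCoupling_onCoord_update (.symm ?_)
    simpa using cycleReflection_allowsCoupling_add_one hs hL (x j - 1)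

lemma torusAdj_onCoord_cycleReflection_iff (i : Fin d) (x y : TorusPt d L) :
    torusAdj (((cycleReflection hs).onCoord i).map x)
      (((cycleReflection hs).onCoord i).map y) ↔ torusAdj x y := by
  set θ : HalfReflection (TorusPt d L) := (cycleReflection hs).onCoord i with hθ
  have himp {x y : TorusPt d L} (hxy : torusAdj x y) : torusAdj (θ.map x) (θ.map y) := by
    obtain ⟨j, hj⟩ := hxy
    refine ⟨j, ?_⟩
    obtain rfl | hij := eq_or_ne i j
    · have hflip (t : ZMod L) :
          -(x i + t + s) = -(x i + s) - t ∧ -(x i - t + s) = -(x i + s) + t := by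
        constructor <;> ring
      obtain rfl | rfl := hj
      · exact .inr (by simp [hθ, cycleReflection_map_apply, hflip])
      · exact .inl (by simp [hθ, cycleReflection_map_apply, hflip])
    · refine hj.imp ?_ ?_ <;> rintro rfl <;> simp [hθ, hij, hij.symm, Function.update_comm hij]
  exact ⟨fun h => by simpa only [θ.involutive x, θ.involutive y] using himp h, himp⟩

end AxisReflection

section AxisMonotonicity

variable {d L : ℕ}

lemma antitoneOn_of_convex_of_symm {v : ℕ → ℝ}
    (hconv : ∀ n, n + 2 ≤ L → 2 * v (n + 1) ≤ v n + v (n + 2))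
    (hsymm : ∀ n ≤ L, v (L - n) = v n) : AntitoneOn v {n | 2 * n ≤ L} := by
  have hincr {m n : ℕ} (hmn : m ≤ n) : n + 1 ≤ L → v (m + 1) - v m ≤ v (n + 1) - v n := by
    induction n, hmn using Nat.le_induction with
    | base => exact fun _ => le_rfl
    | succ n _ ih => exact fun hn => by linarith [ih (by omega), hconv n hn]
  have hstep (n : ℕ) (hn : 2 * (n + 1) ≤ L) : v (n + 1) ≤ v n := by
    have hle := hincr (show n ≤ L - (n + 1) by omega) (by omega)
    rw [hsymm _ (by omega), show L - (n + 1) + 1 = L - n by omega, hsymm _ (by omega)] at hle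
    linarith
  have hconn : {n | 2 * n ≤ L}.OrdConnected := ⟨fun _ _ n hn m hm => by
    have hle := hm.2
    simp only [Set.mem_ofPred_eq] at hn ⊢
    omega⟩
  exact antitoneOn_of_succ_le hconn fun n _ _ hn => hstep n hn

lemma hatCoord_le_of_inBoxQ {x z : TorusPt d L} (hx : inBoxQ z x) (i : Fin d) :
    hatCoord x i ≤ hatCoord z i := by
  have hxi := hx i
  unfold hatCoord at hxi ⊢
  omega

variable {N : ℕ} [NeZero L] [NeZero N] {β : ℝ}

lemma two_mul_corrOne_le_single_add_single (hL : Even L) (hβ : 0 ≤ β) {u : TorusPt d L}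
    {i : Fin d} {n p q : ℕ} (hp : p ≤ L) (hq : q ≤ L) (hpq : p + q = 2 * n)
    (hu : u i = n) :
    2 * corrOne d L N β 0 u ≤
      corrOne d L N β 0 (Pi.single i (p : ZMod L)) +
        corrOne d L N β 0 (Pi.single i (q : ZMod L)) := by
  obtain ⟨k, s, rfl, hs⟩ : ∃ k s, p = 2 * k + s ∧ s ≤ 1 := ⟨p / 2, p % 2, by omega, by omega⟩
  obtain ⟨l, rfl⟩ : ∃ l, q = 2 * l + s := ⟨q / 2, by omega⟩
  obtain rfl : n = k + l + s := by omega
  have hval {m : ℕ} (hm : 2 * m + s ≤ L) : 2 * (m : ZMod L).val + s ≤ L := by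
    have hmod := Nat.mod_le m L
    rw [ZMod.val_natCast]
    omega
  let θ : HalfReflection (TorusPt d L) := (cycleReflection hs).onCoord i
  let u' : TorusPt d L := Function.update u i k
  let v' : TorusPt d L := Pi.single i (l : ZMod L)
  have huv : u' - θ.map v' = u := by
    ext j; obtain rfl | hj := eq_or_ne j i <;>
      simp [u', v', θ, cycleReflection_map_apply, ← add_assoc, -neg_add_rev, *]
  have huu : u' - θ.map u' = Pi.single i ((2 * k + s : ℕ) : ZMod L) := by
    ext j; obtain rfl | hj := eq_or_ne j i <;>
      simp [u', θ, cycleReflection_map_apply, two_mul, ← add_assoc, -neg_add_rev, *]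
  have hvv : v' - θ.map v' = Pi.single i ((2 * l + s : ℕ) : ZMod L) := by
    ext j; obtain rfl | hj := eq_or_ne j i <;>
      simp [v', θ, cycleReflection_map_apply, two_mul, ← add_assoc, -neg_add_rev, *]
  rw [← huv, ← huu, ← hvv, corrOne_zero_sub, corrOne_zero_sub, corrOne_zero_sub]
  exact two_mul_corrOne_map_le hβ (torusAdj_onCoord_cycleReflection_iff hs i)
    (fun x y => allowsCoupling_onCoord_cycleReflection hs hL i)
    (by simpa [u', θ, mem_cycleReflection_half] using hval hp)
    (by simpa [v', θ, mem_cycleReflection_half] using hval hq)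

lemma corrOne_zero_le_single (hL : Even L) (hβ : 0 ≤ β) (u : TorusPt d L) (i : Fin d) :
    corrOne d L N β 0 u ≤ corrOne d L N β 0 (Pi.single i (u i)) := by
  have hlt := (u i).val_lt
  have hle := two_mul_corrOne_le_single_add_single (N := N) hL hβ hlt.le hlt.le
    (two_mul (u i).val).symm (ZMod.natCast_zmod_val (u i)).symm
  rw [ZMod.natCast_zmod_val] at hle
  linarith

lemma corrOne_zero_neg (u : TorusPt d L) : corrOne d L N β 0 (-u) = corrOne d L N β 0 u := by
  rw [← zero_sub, corrOne_zero_sub, corrOne_comm]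

lemma corrOne_single_natCast_sub {n : ℕ} (hn : n ≤ L) (i : Fin d) :
    corrOne d L N β 0 (Pi.single i ((L - n : ℕ) : ZMod L)) =
      corrOne d L N β 0 (Pi.single i (n : ZMod L)) := by
  rw [← corrOne_zero_neg]
  simp [Nat.cast_sub hn, ← Pi.single_neg]

lemma antitoneOn_corrOne_single (hL : Even L) (hβ : 0 ≤ β) (i : Fin d) :
    AntitoneOn (fun n : ℕ => corrOne d L N β 0 (Pi.single i (n : ZMod L))) {n | 2 * n ≤ L} :=
  antitoneOn_of_convex_of_symm
    (fun n hn => two_mul_corrOne_le_single_add_single (n := n + 1) hL hβ (by omega) hn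
      (by omega) (by simp))
    (fun _ hn => corrOne_single_natCast_sub hn i)

lemma corrOne_single_hatCoord (x : TorusPt d L) (i : Fin d) :
    corrOne d L N β 0 (Pi.single i (hatCoord x i : ZMod L)) =
      corrOne d L N β 0 (Pi.single i (x i)) := by
  obtain h | h := min_choice (x i).val (L - (x i).val)
  · rw [hatCoord, h, ZMod.natCast_zmod_val]
  · rw [hatCoord, h, corrOne_single_natCast_sub (x i).val_lt.le, ZMod.natCast_zmod_val]

lemma corrOne_le_single_of_inBoxQ (hL : Even L) (hβ : 0 ≤ β) {x z : TorusPt d L}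
    (hx : inBoxQ z x) (i : Fin d) :
    corrOne d L N β 0 z ≤ corrOne d L N β 0 (Pi.single i (x i)) := by
  have hmem (y : TorusPt d L) : 2 * hatCoord y i ≤ L := by unfold hatCoord; omega
  rw [← corrOne_single_hatCoord]
  refine (corrOne_zero_le_single hL hβ z i).trans ?_
  rw [← corrOne_single_hatCoord]
  exact antitoneOn_corrOne_single hL hβ i (hmem x) (hmem z) (hatCoord_le_of_inBoxQ hx i)

end AxisMonotonicity

section NumericalBounds

lemma sq_le_two_pow_succ (n : ℕ) : n ^ 2 ≤ 2 ^ (n + 1) := by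
  induction n with
  | zero => simp
  | succ n ih =>
    obtain hn | hn := le_or_gt n 2
    · interval_cases n <;> norm_num
    · rw [pow_succ 2]
      nlinarith

lemma mul_exp_neg_two_mul_div_le_one {d N : ℕ} [NeZero N] {β : ℝ} (hβ : 0 ≤ β) (hd : d ≠ 0) :
    β * Real.exp (-2 * d * β) / N ≤ 1 := by
  have hd' : (1 : ℝ) ≤ d := by exact_mod_cast Nat.one_le_iff_ne_zero.2 hd
  have hN : (1 : ℝ) ≤ N := by exact_mod_cast NeZero.pos N
  calc β * Real.exp (-2 * d * β) / N
      ≤ β * Real.exp (-2 * d * β) := div_le_self (by positivity) hN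
    _ ≤ β * Real.exp (-β) := by gcongr; nlinarith
    _ ≤ Real.exp (-1) := Real.mul_exp_neg_le_exp_neg_one β
    _ ≤ 1 := Real.exp_le_one_iff.2 (by norm_num)

lemma card_filter_ne_zero_lt_of_not_inHL {d L : ℕ} {x : TorusPt d L} (hx : ¬ inHL x) :
    Finset.card {i | x i ≠ 0} < d := by
  obtain ⟨j, hj⟩ := not_forall_not.1 fun h => hx (.inl h)
  simpa using Finset.card_lt_univ_of_notMem (s := {i | x i ≠ 0}) (x := j) (by simpa using hj)

lemma mul_pow_le_max_zero {a b c : ℝ} (hab : a ≤ b) (hc₀ : 0 ≤ c) (hc₁ : c ≤ 1) (n : ℕ) :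
    a * c ^ n ≤ max 0 b := by
  obtain ha | ha := le_total a 0
  · exact le_max_of_le_left (mul_nonpos_of_nonpos_of_nonneg ha (pow_nonneg hc₀ n))
  · exact le_max_of_le_right ((mul_le_of_le_one_right ha (pow_le_one₀ hc₀ hc₁)).trans hab)

lemma mul_pow_le_max_zero_of_not_inHL {d L N : ℕ} [NeZero N] {β δ : ℝ} (hβ : 0 ≤ β) (hδ : 0 ≤ δ)
    {x : TorusPt d L} (hx : ¬ inHL x) :
    (1 / (N : ℝ) - 2 ^ d * δ) * (β * Real.exp (-2 * d * β) / N) ^ (d - 2) ≤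
      max 0 (1 / (N : ℝ) - (Finset.card {i | x i ≠ 0} : ℝ) ^ 2 * δ) := by
  have hcard := card_filter_ne_zero_lt_of_not_inHL hx
  have hsq : (Finset.card {i | x i ≠ 0} : ℝ) ^ 2 ≤ 2 ^ d := by
    exact_mod_cast (sq_le_two_pow_succ _).trans (Nat.pow_le_pow_right two_pos hcard)
  exact mul_pow_le_max_zero (by gcongr) (by positivity)
    (mul_exp_neg_two_mul_div_le_one hβ (by omega)) _

end NumericalBounds

theorem spin_lower_bound_in_box_not_HL_general {d L N : ℕ} [NeZero L] [NeZero N] (hL : Even L)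
    {β : ℝ} (hβ : 0 ≤ β) {δ : ℝ} {z : TorusPt d L}
    (hz : 1 / (N : ℝ) - δ ≤ corrOne d L N β (torusOrigin d L) z)
    {x : TorusPt d L} (hx : inBoxQ z x) :
    1 / (N : ℝ) - (Finset.card {i | x i ≠ 0} : ℝ) ^ 2 * δ ≤
      corrOne d L N β (torusOrigin d L) x := by
  have hδ : 0 ≤ δ := by linarith [hz.trans (corrOne_le_one_div _ z)]
  have hsum : ∑ i with x i ≠ 0, Pi.single i (x i) = x := by
    rw [Finset.sum_filter_of_ne fun i _ => mt fun hi => by rw [hi, Pi.single_zero],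
      Finset.univ_sum_single]
  have hle := one_div_sub_card_sq_mul_le_corrOne_sum (N := N) (β := β) (s := {i | x i ≠ 0}) hδ
    fun i _ => hz.trans (corrOne_le_single_of_inBoxQ hL hβ hx i)
  rwa [hsum] at hle

/-- **Propagation of a lower bound inside the box `Q_z` (points outside `H_L`).**
Let `δ > 0` and `z ∈ T_L ∩ H_L` with `‖z‖_∞ ≤ L/2`. If `⟨φ_o^1 φ_z^1⟩ ≥ 1/N - δ`, then
`⟨φ_o^1 φ_x^1⟩ ≥ (1/N - 2^d δ)(β e^{-2dβ}/N)^{d-2}` for every `x ∈ Q_z ∖ H_L`. -/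
theorem spin_lower_bound_in_box_not_HL
    (d L N : ℕ) [NeZero L] [NeZero N] (hd : 2 ≤ d) (hL : Even L)
    (β : ℝ) (hβ : 0 ≤ β) (δ : ℝ) (hδ : 0 < δ)
    (z : TorusPt d L) (hzH : inHL z) (hznorm : 2 * tnormInf z ≤ L)
    (hz : 1 / (N : ℝ) - δ ≤ corrOne d L N β (torusOrigin d L) z) :
    ∀ x : TorusPt d L, inBoxQ z x → ¬ inHL x →
      (1 / (N : ℝ) - 2 ^ d * δ) * (β * Real.exp (-2 * d * β) / N) ^ (d - 2) ≤
        corrOne d L N β (torusOrigin d L) x := by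
  intro x hx hxH
  exact (mul_pow_le_max_zero_of_not_inHL hβ hδ.le hxH).trans
    (max_le (corrOne_nonneg hβ _ x) (spin_lower_bound_in_box_not_HL_general hL hβ hz hx))
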